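/- Consider the homogeneous-stubbornness perception dynamics p(s+1) = a W(p(s))^⊤ p(s) + ((1 − a)/n) 𝟙_n with a ∈ (0,1). If a ≤ (5n − 7)/(8(n − 1)), then every trajectory starting from p(0) ∈ Δ_n converges exponentially (there exist c > 0 and λ ∈ (0,1) with ‖p(s) − p*‖ ≤ c λ^s for all s) to the unique equilibrium p* of the dynamics in Δ_n, which lies in the interior of Δ_n. -/

import Mathlib

/-!
On the set of simplex points whose coordinates are at most `x̄ = a + (1 - a) / n`, the map is a
contraction in the `ℓ¹` distance. In coordinates (`homoMap_apply`)
`f(p)ᵢ = a (pᵢ² + ∑ⱼ Cⱼᵢ (1 - pⱼ) pⱼ) + (1 - a) / n`, so row-stochasticity of `C` gives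
`‖f(p) - f(q)‖₁ ≤ a ∑ⱼ (tⱼ + |1 - tⱼ|) |pⱼ - qⱼ|` with `tⱼ = pⱼ + qⱼ`
(`sum_abs_homoMap_sub_le`). Since `0 ≤ tⱼ ≤ 2 x̄`, the factor is at most
`max a (a (4 x̄ - 1))`, and the hypothesis on `a` is what makes `a (4 x̄ - 1) < 1`
(`rate_lt_one`). Finally `f` sends the whole simplex into this set in one step
(`homoMap_le`), because the nonnegative entries of `W(p)ᵀ p` sum to `1`.
-/

open Matrix Finset

/-- `W(x) = diag(x) + (I - diag(x)) C`. -/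
noncomputable def Wmat (n : ℕ) (C : Matrix (Fin n) (Fin n) ℝ) (x : Fin n → ℝ) :
    Matrix (Fin n) (Fin n) ℝ :=
  Matrix.diagonal x + (1 - Matrix.diagonal x) * C

/-- The homogeneous-stubbornness perception dynamics map
`p ↦ a W(p)ᵀ p + ((1 - a)/n) 𝟙`. -/
noncomputable def homoMap (n : ℕ) (C : Matrix (Fin n) (Fin n) ℝ) (a : ℝ)
    (p : Fin n → ℝ) : Fin n → ℝ :=
  a • ((Wmat n C p)ᵀ *ᵥ p) + ((1 - a) / (n : ℝ)) • (fun _ => (1 : ℝ))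

/-- The `n`-simplex `Δ_n`. -/
def simplex (n : ℕ) : Set (Fin n → ℝ) := {x | (∀ i, 0 ≤ x i) ∧ ∑ i, x i = 1}

/-- The box `Γ_n(y, z) = {x : y ≤ x ≤ z}`. -/
def box (n : ℕ) (y z : Fin n → ℝ) : Set (Fin n → ℝ) := {x | ∀ i, y i ≤ x i ∧ x i ≤ z i}

theorem homoMap_apply (n : ℕ) (C : Matrix (Fin n) (Fin n) ℝ) (a : ℝ) (p : Fin n → ℝ)
    (i : Fin n) :
    homoMap n C a p i = a * (p i ^ 2 + ∑ j, C j i * ((1 - p j) * p j)) + (1 - a) / (n : ℝ) := by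
  have h : ((Wmat n C p)ᵀ *ᵥ p) i = p i ^ 2 + ∑ j, C j i * ((1 - p j) * p j) := by
    have hW : Wmat n C p = Matrix.diagonal p + (C - Matrix.diagonal p * C) := by
      rw [Wmat, sub_mul, one_mul]
    rw [hW, Matrix.transpose_add, Matrix.add_mulVec, Matrix.diagonal_transpose, Pi.add_apply,
      Matrix.mulVec_diagonal, pow_two]
    congr 1
    simp only [Matrix.mulVec, dotProduct, Matrix.transpose_apply, Matrix.sub_apply,
      Matrix.diagonal_mul]
    exact Finset.sum_congr rfl fun j _ => by ring
  simp [homoMap, h]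

theorem le_one_of_mem_simplex {n : ℕ} {p : Fin n → ℝ} (hp : p ∈ simplex n) (i : Fin n) :
    p i ≤ 1 :=
  hp.2 ▸ Finset.single_le_sum (fun j _ => hp.1 j) (Finset.mem_univ i)

section

variable {n : ℕ} {C : Matrix (Fin n) (Fin n) ℝ}

theorem sum_sum_mul_of_row (hCrow : ∀ i, ∑ j, C i j = 1) (g : Fin n → ℝ) :
    ∑ i, ∑ j, C j i * g j = ∑ j, g j := by
  rw [Finset.sum_comm]
  exact Finset.sum_congr rfl fun j _ => by rw [← Finset.sum_mul, hCrow, one_mul]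

theorem core_nonneg (hC0 : ∀ i j, 0 ≤ C i j) {p : Fin n → ℝ} (hp : p ∈ simplex n) (i : Fin n) :
    0 ≤ p i ^ 2 + ∑ j, C j i * ((1 - p j) * p j) :=
  add_nonneg (sq_nonneg _) (Finset.sum_nonneg fun j _ => mul_nonneg (hC0 j i)
    (mul_nonneg (sub_nonneg.2 (le_one_of_mem_simplex hp j)) (hp.1 j)))

theorem core_sum (hCrow : ∀ i, ∑ j, C i j = 1) {p : Fin n → ℝ} (hp : p ∈ simplex n) :
    ∑ i, (p i ^ 2 + ∑ j, C j i * ((1 - p j) * p j)) = 1 := by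
  rw [Finset.sum_add_distrib, sum_sum_mul_of_row hCrow, ← Finset.sum_add_distrib]
  refine Eq.trans ?_ hp.2
  exact Finset.sum_congr rfl fun j _ => by ring

theorem homoMap_pos (hn : 2 ≤ n) (hC0 : ∀ i j, 0 ≤ C i j) {a : ℝ} (ha : a ∈ Set.Ioo (0 : ℝ) 1)
    {p : Fin n → ℝ} (hp : p ∈ simplex n) (i : Fin n) : 0 < homoMap n C a p i := by
  rw [homoMap_apply]
  have hn0 : (0 : ℝ) < n := by exact_mod_cast (by omega : 0 < n)
  exact add_pos_of_nonneg_of_pos (mul_nonneg ha.1.le (core_nonneg hC0 hp i))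
    (div_pos (sub_pos.2 ha.2) hn0)

theorem homoMap_le (hC0 : ∀ i j, 0 ≤ C i j) (hCrow : ∀ i, ∑ j, C i j = 1)
    {a : ℝ} (ha : a ∈ Set.Ioo (0 : ℝ) 1)
    {p : Fin n → ℝ} (hp : p ∈ simplex n) (i : Fin n) :
    homoMap n C a p i ≤ a + (1 - a) / (n : ℝ) := by
  rw [homoMap_apply]
  have h : p i ^ 2 + ∑ j, C j i * ((1 - p j) * p j) ≤ 1 := by
    have := Finset.single_le_sum (fun k _ => core_nonneg hC0 hp k) (Finset.mem_univ i)
    rwa [core_sum hCrow hp] at this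
  have := mul_le_mul_of_nonneg_left h ha.1.le
  linarith

theorem homoMap_mem_simplex (hn : 2 ≤ n) (hC0 : ∀ i j, 0 ≤ C i j)
    (hCrow : ∀ i, ∑ j, C i j = 1) {a : ℝ} (ha : a ∈ Set.Ioo (0 : ℝ) 1)
    {p : Fin n → ℝ} (hp : p ∈ simplex n) : homoMap n C a p ∈ simplex n := by
  refine ⟨fun i => (homoMap_pos hn hC0 ha hp i).le, ?_⟩
  have hn0 : (n : ℝ) ≠ 0 := by exact_mod_cast (by omega : n ≠ 0)
  simp only [homoMap_apply]
  rw [Finset.sum_add_distrib, ← Finset.mul_sum, core_sum hCrow hp]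
  simp
  field_simp
  ring

/-- The `ℓ¹` estimate behind the contraction: `p ↦ p²` changes by the factor `p + q`, and
`p ↦ (1 - p) p` by the factor `1 - (p + q)`. -/
theorem sum_abs_homoMap_sub_le (hC0 : ∀ i j, 0 ≤ C i j)
    (hCrow : ∀ i, ∑ j, C i j = 1) {a : ℝ} (ha : 0 ≤ a) {p q : Fin n → ℝ}
    (hp : ∀ i, 0 ≤ p i) (hq : ∀ i, 0 ≤ q i) :
    ∑ i, |homoMap n C a p i - homoMap n C a q i| ≤
      ∑ i, a * ((p i + q i) + |1 - (p i + q i)|) * |p i - q i| := by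
  have key : ∀ i, |homoMap n C a p i - homoMap n C a q i| ≤
      a * ((p i + q i) * |p i - q i|) +
        a * ∑ j, C j i * (|1 - (p j + q j)| * |p j - q j|) := by
    intro i
    have e : homoMap n C a p i - homoMap n C a q i =
        a * ((p i + q i) * (p i - q i) +
          ∑ j, C j i * ((1 - (p j + q j)) * (p j - q j))) := by
      have : ∑ j, C j i * ((1 - (p j + q j)) * (p j - q j)) =
          ∑ j, C j i * ((1 - p j) * p j) - ∑ j, C j i * ((1 - q j) * q j) := by
        rw [← Finset.sum_sub_distrib]
        exact Finset.sum_congr rfl fun j _ => by ring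
      rw [homoMap_apply, homoMap_apply, this]
      ring
    rw [e, abs_mul, abs_of_nonneg ha, ← mul_add]
    refine mul_le_mul_of_nonneg_left ((abs_add_le _ _).trans (add_le_add ?_ ?_)) ha
    · rw [abs_mul, abs_of_nonneg (add_nonneg (hp i) (hq i))]
    · refine (Finset.abs_sum_le_sum_abs _ _).trans (Finset.sum_le_sum fun j _ => ?_)
      rw [abs_mul, abs_mul, abs_of_nonneg (hC0 j i)]
  refine (Finset.sum_le_sum fun i _ => key i).trans (le_of_eq ?_)
  rw [Finset.sum_add_distrib, ← Finset.mul_sum, ← Finset.mul_sum, sum_sum_mul_of_row hCrow,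
    ← mul_add, ← Finset.sum_add_distrib, Finset.mul_sum]
  exact Finset.sum_congr rfl fun j _ => by ring

end

/-- With `x̄ = a + (1 - a) / n`, the hypothesis on `a` gives `a (4 x̄ - 1) < 1`: it bounds the
left side by `(5n - 7)(3n + 1) / (16 n (n - 1))`, whose numerator is
`15n² - 16n - 7 < 16n² - 16n`. -/
theorem rate_lt_one {N a : ℝ} (hN : 2 ≤ N) (ha : 0 < a)
    (hacond : a ≤ (5 * N - 7) / (8 * (N - 1))) :
    a * (4 * (a + (1 - a) / N) - 1) < 1 := by
  have hN0 : 0 < N := by linarith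
  have h1 : a * (8 * (N - 1)) ≤ 5 * N - 7 := (le_div_iff₀ (by linarith)).1 hacond
  have h2 : a * (4 * (a + (1 - a) / N) - 1) = a * (4 * (a * (N - 1)) + 4 - N) / N := by
    field_simp
    ring
  rw [h2, div_lt_one hN0]
  have h3 : a * (4 * (a * (N - 1)) + 4 - N) ≤ a * ((3 * N + 1) / 2) :=
    mul_le_mul_of_nonneg_left (by linarith) ha.le
  have h4 : a * ((3 * N + 1) / 2) < N := by
    have h5 := mul_le_mul_of_nonneg_right h1 (by linarith : 0 ≤ 3 * N + 1)
    by_contra! h6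
    have h7 := mul_le_mul_of_nonneg_right h6 (by linarith : 0 ≤ 16 * (N - 1))
    nlinarith
  linarith

/-- Theorem 5(ii): for the homogeneous-stubbornness dynamics with
`a ≤ (5n - 7)/(8(n - 1))`, every trajectory starting in the simplex converges
exponentially to the unique equilibrium `p*`, which lies in the interior of `Δ_n`. -/
theorem homogeneous_exponential_convergence
    (n : ℕ) (hn : 2 ≤ n)
    (C : Matrix (Fin n) (Fin n) ℝ)
    (hC0 : ∀ i j, 0 ≤ C i j) (hCrow : ∀ i, ∑ j, C i j = 1) (hCdiag : ∀ i, C i i = 0)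
    (a : ℝ) (ha : a ∈ Set.Ioo (0 : ℝ) 1)
    (hacond : a ≤ (5 * (n : ℝ) - 7) / (8 * ((n : ℝ) - 1)))
    (pstar : Fin n → ℝ) (hps : pstar ∈ simplex n) (hpe : homoMap n C a pstar = pstar)
    (hpuniq : ∀ q ∈ simplex n, homoMap n C a q = q → q = pstar)
    (p : ℕ → Fin n → ℝ) (hp : ∀ s, p (s + 1) = homoMap n C a (p s))
    (hp0 : p 0 ∈ simplex n) :
    (∀ i, 0 < pstar i) ∧
    ∃ c > 0, ∃ lam ∈ Set.Ioo (0 : ℝ) 1, ∀ s : ℕ, ‖p s - pstar‖ ≤ c * lam ^ s := by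
  have hn2 : (2 : ℝ) ≤ n := by exact_mod_cast hn
  have hpos : ∀ i, 0 < pstar i := fun i => hpe ▸ homoMap_pos hn hC0 ha hps i
  refine ⟨hpos, ?_⟩
  set xbar : ℝ := a + (1 - a) / (n : ℝ)
  set lam : ℝ := max a (a * (4 * xbar - 1))
  have hlam0 : 0 < lam := lt_max_of_lt_left ha.1
  have hlam1 : lam < 1 := max_lt ha.2 (rate_lt_one hn2 ha.1 hacond)
  have hmem : ∀ s, p s ∈ simplex n := by
    intro s
    induction s with
    | zero => exact hp0
    | succ s ih => rw [hp]; exact homoMap_mem_simplex hn hC0 hCrow ha ih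
  have hxs : ∀ i, pstar i ≤ xbar := fun i => by
    have := homoMap_le hC0 hCrow ha hps i
    rwa [hpe] at this
  have hxp : ∀ s i, p (s + 1) i ≤ xbar := fun s i => by
    rw [hp]
    exact homoMap_le hC0 hCrow ha (hmem s) i
  set E : ℕ → ℝ := fun s => ∑ i, |p s i - pstar i|
  have hE0 : ∀ s, 0 ≤ E s := fun s => Finset.sum_nonneg fun i _ => abs_nonneg _
  have hnorm : ∀ s, ‖p s - pstar‖ ≤ E s := fun s =>
    (pi_norm_le_iff_of_nonneg (hE0 s)).2 fun i =>
      Finset.single_le_sum (f := fun i => |p s i - pstar i|) (fun j _ => abs_nonneg _)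
        (Finset.mem_univ i)
  have hstep : ∀ s, E (s + 2) ≤ lam * E (s + 1) := by
    intro s
    have h := sum_abs_homoMap_sub_le hC0 hCrow ha.1.le (hmem (s + 1)).1 hps.1
    rw [hpe, ← hp (s + 1)] at h
    refine h.trans ?_
    simp only [E]
    rw [Finset.mul_sum]
    refine Finset.sum_le_sum fun i _ => mul_le_mul_of_nonneg_right ?_ (abs_nonneg _)
    have ht : p (s + 1) i + pstar i ≤ 2 * xbar := by linarith [hxp s i, hxs i]
    rcases le_total (p (s + 1) i + pstar i) 1 with h1 | h1
    · rw [abs_of_nonneg (by linarith)]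
      exact le_max_of_le_left (by linarith)
    · rw [abs_of_nonpos (by linarith)]
      exact le_max_of_le_right (mul_le_mul_of_nonneg_left (by linarith) ha.1.le)
  have hgeo : ∀ s, E (s + 1) ≤ E 1 * lam ^ s := by
    intro s
    induction s with
    | zero => simp
    | succ s ih =>
      calc E (s + 2) ≤ lam * E (s + 1) := hstep s
        _ ≤ lam * (E 1 * lam ^ s) := mul_le_mul_of_nonneg_left ih hlam0.le
        _ = E 1 * lam ^ (s + 1) := by ring
  -- The contraction only starts at time `1`, so the constant must also cover time `0`.
  have hd : 0 ≤ E 1 / lam := div_nonneg (hE0 1) hlam0.le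
  refine ⟨E 0 + E 1 / lam + 1, by linarith [hE0 0], lam, ⟨hlam0, hlam1⟩, fun s => ?_⟩
  refine (hnorm s).trans ?_
  cases s with
  | zero => rw [pow_zero, mul_one]; linarith
  | succ s =>
    calc E (s + 1) ≤ E 1 * lam ^ s := hgeo s
      _ = E 1 / lam * lam ^ (s + 1) := by rw [pow_succ]; field_simp
      _ ≤ (E 0 + E 1 / lam + 1) * lam ^ (s + 1) :=
        mul_le_mul_of_nonneg_right (by linarith [hE0 0]) (pow_nonneg hlam0.le _)
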